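/- Consider the periodic checkerboard potential: assume additionally 1/(2ε) ∈ ℕ and V(x) = α whenever ⌊x_i/ε⌋ is even for every i = 1, …, d, and V(x) = β otherwise, and set N := (2ε)^{-d}. There exist constants c, c' > 0 depending only on d such that for every integer ℓ ≥ 2, if β ≥ c' (ℓ−1)² ε^{-2}, then μ_{N ℓ^d + 1} ≥ c (ℓ−1)²/ε². (Lemma 5.3 of the paper: lower eigenvalue bound for the periodic potential.) -/

import Mathlib

open MeasureTheory Real
open scoped BigOperators RealInnerProductSpace

noncomputable section

/-- A function on `ℝ^d` is periodic if it is `ℤ^d`-periodic. -/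
def ZPeriodic {d : ℕ} (f : (Fin d → ℝ) → ℝ) : Prop :=
  ∀ (x : Fin d → ℝ) (k : Fin d → ℤ), f (x + fun i => (k i : ℝ)) = f x

/-- The unit cell `[0,1)^d`. -/
def unitCell (d : ℕ) : Set (Fin d → ℝ) := Set.univ.pi fun _ => Set.Ico (0 : ℝ) 1

/-- Squared Euclidean norm `|∇f(x)|²` of the (a.e. defined) gradient of `f`. -/
def gradSq {d : ℕ} (f : (Fin d → ℝ) → ℝ) (x : Fin d → ℝ) : ℝ :=
  ∑ i, (fderiv ℝ f x (Pi.single i 1)) ^ 2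

/-- `‖v‖²`, the squared `L²` norm over the unit cell. -/
def l2sq {d : ℕ} (v : (Fin d → ℝ) → ℝ) : ℝ := ∫ x in unitCell d, (v x) ^ 2

/-- `‖∇v‖²_{L²([0,1)^d)}`. -/
def gradL2sq {d : ℕ} (v : (Fin d → ℝ) → ℝ) : ℝ := ∫ x in unitCell d, gradSq v x

/-- `|||v|||²`, the squared energy norm over the unit cell. -/
def energySq {d : ℕ} (V v : (Fin d → ℝ) → ℝ) : ℝ :=
  ∫ x in unitCell d, (gradSq v x + V x * (v x) ^ 2)

/-- The open grid cell of side `ε` with lower-left corner `ε q`. -/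
def gridCell {d : ℕ} (ε : ℝ) (q : Fin d → ℤ) : Set (Fin d → ℝ) :=
  {x | ∀ i, (q i : ℝ) * ε < x i ∧ x i < ((q i : ℝ) + 1) * ε}

/-- `V` is a periodic two-valued potential, constant on each (open) grid cell. -/
def IsGridPotential {d : ℕ} (ε α β : ℝ) (V : (Fin d → ℝ) → ℝ) : Prop :=
  ZPeriodic V ∧ (∀ x, V x = α ∨ V x = β) ∧
    ∀ q : Fin d → ℤ, (∀ x ∈ gridCell ε q, V x = α) ∨ (∀ x ∈ gridCell ε q, V x = β)

/-- The axis-aligned closed cube of side `ε m` which is the union of the grid cells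
`q + r`, `r ∈ {0, …, m-1}^d`. -/
def gridCube {d : ℕ} (ε : ℝ) (q : Fin d → ℤ) (m : ℕ) : Set (Fin d → ℝ) :=
  {x | ∀ i, (q i : ℝ) * ε ≤ x i ∧ x i ≤ ((q i : ℝ) + (m : ℝ)) * ε}

/-- An α-cube: a closed cube, union of grid cells, contained in `closure {V = α}`. -/
def IsAlphaCube {d : ℕ} (ε α : ℝ) (V : (Fin d → ℝ) → ℝ) (q : Fin d → ℤ) (m : ℕ) : Prop :=
  1 ≤ m ∧ gridCube ε q m ⊆ closure {x | V x = α}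

/-- A maximal α-cube: an α-cube maximal under inclusion among α-cubes. -/
def IsMaxAlphaCube {d : ℕ} (ε α : ℝ) (V : (Fin d → ℝ) → ℝ) (q : Fin d → ℤ) (m : ℕ) : Prop :=
  IsAlphaCube ε α V q m ∧ ∀ q' m', IsAlphaCube ε α V q' m' →
    gridCube ε q m ⊆ gridCube ε q' m' → gridCube ε q m = gridCube ε q' m'

/-- `ε L` is the largest side length of a maximal α-cube (with `L = 1` if no α-cube exists):
the maximal width of a potential valley. -/
def IsValleyWidth {d : ℕ} (ε α : ℝ) (V : (Fin d → ℝ) → ℝ) (L : ℕ) : Prop :=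
  IsGreatest {m | ∃ q, IsMaxAlphaCube ε α V q m} L ∨
    ((∀ q m, ¬ IsAlphaCube ε α V q m) ∧ L = 1)

/-- `κ` is the maximal number of maximal α-cubes containing a common α-grid cell. -/
def IsOverlapNumber {d : ℕ} (ε α : ℝ) (V : (Fin d → ℝ) → ℝ) (κ : ℕ) : Prop :=
  IsGreatest {n | ∃ q : Fin d → ℤ, (∀ x ∈ gridCell ε q, V x = α) ∧
    n = Nat.card {p : (Fin d → ℤ) × ℕ //
      IsMaxAlphaCube ε α V p.1 p.2 ∧ gridCell ε q ⊆ gridCube ε p.1 p.2}} κ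

/-- A cut-off function `η` with constant `Cη`: periodic, `C¹`, `[0,1]`-valued, equal to `1`
on every α-cell, vanishing on the closed concentric subcube of side `ε/2` of every β-cell,
with `‖∇η‖_∞ ≤ Cη / ε`. -/
structure IsCutoff {d : ℕ} (ε Cη α β : ℝ) (V η : (Fin d → ℝ) → ℝ) : Prop where
  periodic : ZPeriodic η
  contDiff : ContDiff ℝ 1 η
  mem_Icc : ∀ x, η x ∈ Set.Icc (0 : ℝ) 1
  eq_one : ∀ q : Fin d → ℤ, (∀ x ∈ gridCell ε q, V x = α) → ∀ x ∈ gridCell ε q, η x = 1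
  eq_zero : ∀ q : Fin d → ℤ, (∀ x ∈ gridCell ε q, V x = β) → ∀ x : Fin d → ℝ,
    (∀ i, ((q i : ℝ) + 1/4) * ε ≤ x i ∧ x i ≤ ((q i : ℝ) + 3/4) * ε) → η x = 0
  grad_le : ∀ x, ‖fderiv ℝ η x‖ ≤ Cη / ε


/-- The set of periodic Lipschitz functions on `ℝ^d`. -/
def PeriodicLipschitz (d : ℕ) : Set ((Fin d → ℝ) → ℝ) :=
  {v | ZPeriodic v ∧ ∃ K : NNReal, LipschitzWith K v}

/-- The `m`-th Courant min-max value `μ_m` of the Schrödinger form: the infimum over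
`m`-dimensional subspaces `W` of the space of periodic Lipschitz functions of
`sup {|||v|||²/‖v‖² : v ∈ W, v ≠ 0}`, expressed as the infimum of all upper bounds `M`
of the Rayleigh quotient on some such subspace. -/
def minmaxVal (d : ℕ) (V : (Fin d → ℝ) → ℝ) (m : ℕ) : ℝ :=
  sInf {M : ℝ | ∃ W : Submodule ℝ ((Fin d → ℝ) → ℝ),
    (W : Set ((Fin d → ℝ) → ℝ)) ⊆ PeriodicLipschitz d ∧
    Module.finrank ℝ W = m ∧
    ∀ v ∈ W, v ≠ 0 → energySq V v ≤ M * l2sq v}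

/-! ### Poincaré inequality on boxes -/

lemma measurable_gradSq {d : ℕ} (v : (Fin d → ℝ) → ℝ) : Measurable (gradSq v) := by
  unfold gradSq
  exact Finset.measurable_sum _ fun i _ => (measurable_fderiv_apply_const ℝ v _).pow_const 2

lemma gradSq_nonneg {d : ℕ} (v : (Fin d → ℝ) → ℝ) (x) : 0 ≤ gradSq v x :=
  Finset.sum_nonneg fun i _ => sq_nonneg _

lemma gradSq_le {d : ℕ} {v : (Fin d → ℝ) → ℝ} {K : NNReal} (hv : LipschitzWith K v) (x) :
    gradSq v x ≤ d * (K : ℝ) ^ 2 := by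
  unfold gradSq
  have : ∀ i ∈ (Finset.univ : Finset (Fin d)),
      (fderiv ℝ v x (Pi.single i 1)) ^ 2 ≤ (K : ℝ) ^ 2 := by
    intro i _
    have h1 : ‖fderiv ℝ v x (Pi.single i 1)‖ ≤ K * 1 := by
      refine (ContinuousLinearMap.le_of_opNorm_le _ (norm_fderiv_le_of_lipschitz ℝ hv) _).trans ?_
      simp [Pi.norm_single]
    rw [← sq_abs, ← Real.norm_eq_abs]
    gcongr
    simpa using h1
  refine (Finset.sum_le_sum this).trans ?_
  simp

lemma fderiv_sq_le {d : ℕ} (v : (Fin d → ℝ) → ℝ) (z w : Fin d → ℝ) (h : ℝ)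
    (hw : ∀ i, |w i| ≤ h) : (fderiv ℝ v z w) ^ 2 ≤ d * h ^ 2 * gradSq v z := by
  have e : fderiv ℝ v z w = ∑ i, w i * fderiv ℝ v z (Pi.single i 1) := by
    conv_lhs => rw [pi_eq_sum_univ' w]
    simp
  rw [e]
  refine (Finset.sum_mul_sq_le_sq_mul_sq _ _ _).trans ?_
  unfold gradSq
  refine mul_le_mul_of_nonneg_right ?_ (Finset.sum_nonneg fun i _ => sq_nonneg _)
  have : ∀ i ∈ (Finset.univ : Finset (Fin d)), (w i) ^ 2 ≤ h ^ 2 := by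
    intro i _
    rw [← sq_abs]
    have := hw i
    gcongr
  refine (Finset.sum_le_sum this).trans ?_
  simp

lemma sq_integral_le_lintegral (f : ℝ → ℝ) (hf : Measurable f) (C : ℝ) (hC : ∀ t, |f t| ≤ C) :
    ENNReal.ofReal ((∫ t in Set.Ioc (0 : ℝ) 1, f t) ^ 2)
      ≤ ∫⁻ t in Set.Ioc (0 : ℝ) 1, ENNReal.ofReal ((f t) ^ 2) := by
  haveI : IsProbabilityMeasure (volume.restrict (Set.Ioc (0 : ℝ) 1)) := ⟨by simp⟩
  have h1 : Integrable f (volume.restrict (Set.Ioc (0 : ℝ) 1)) :=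
    Integrable.of_bound hf.aestronglyMeasurable C (ae_of_all _ hC)
  have h2 : Integrable (fun t => f t ^ 2) (volume.restrict (Set.Ioc (0 : ℝ) 1)) := by
    refine Integrable.of_bound (hf.pow_const 2).aestronglyMeasurable (C ^ 2) (ae_of_all _ ?_)
    intro t
    rw [norm_pow]
    exact pow_le_pow_left₀ (norm_nonneg _) (hC t) 2
  rw [← ofReal_integral_eq_lintegral_ofReal h2 (ae_of_all _ fun t => sq_nonneg _)]
  apply ENNReal.ofReal_le_ofReal
  have := (even_two.convexOn_pow (𝕜 := ℝ)).map_integral_le (μ := volume.restrict (Set.Ioc (0 : ℝ) 1))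
    (f := f) (by fun_prop) isClosed_univ (by simp) h1 h2
  exact this

lemma seg_bound {d : ℕ} {v : (Fin d → ℝ) → ℝ} {K : NNReal} (hv : LipschitzWith K v)
    (x y : Fin d → ℝ) (h : ℝ) (hxy : ∀ i, |x i - y i| ≤ h)
    (hdiff : ∀ᵐ t : ℝ, DifferentiableAt ℝ v (y + t • (x - y))) :
    ENNReal.ofReal ((v x - v y) ^ 2) ≤ ENNReal.ofReal (d * h ^ 2) *
      ∫⁻ t in Set.Ioc (0 : ℝ) 1, ENNReal.ofReal (gradSq v (y + t • (x - y))) := by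
  set g : ℝ → ℝ := fun t => v (y + t • (x - y)) with hg
  have hlip : LipschitzWith (K * ‖x - y‖₊) g := by
    refine LipschitzWith.of_dist_le_mul fun s t => ?_
    refine (hv.dist_le_mul _ _).trans ?_
    rw [dist_add_left, dist_eq_norm, ← sub_smul, norm_smul, ← dist_eq_norm]
    simp only [NNReal.coe_mul, coe_nnnorm]
    rw [mul_comm (dist s t), mul_assoc]
  have hac := (hlip.lipschitzOnWith (s := Set.uIcc 0 1)).absolutelyContinuousOnInterval
  have hftc := hac.integral_deriv_eq_sub
  rw [intervalIntegral.integral_of_le zero_le_one] at hftc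
  have e1 : v x - v y = ∫ t in Set.Ioc (0 : ℝ) 1, deriv g t := by
    rw [hftc]; simp [hg]
  rw [e1]
  refine (sq_integral_le_lintegral (deriv g) (measurable_deriv g) (K * ‖x - y‖₊ : NNReal) ?_).trans ?_
  · intro t
    have := norm_deriv_le_of_lipschitz hlip (x₀ := t)
    exact this
  rw [← lintegral_const_mul]
  swap
  · apply ENNReal.measurable_ofReal.comp
    apply (measurable_gradSq v).comp
    fun_prop
  apply lintegral_mono_ae
  filter_upwards [ae_restrict_of_ae hdiff] with t ht
  rw [← ENNReal.ofReal_mul (by positivity)]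
  apply ENNReal.ofReal_le_ofReal
  have hd : HasDerivAt g (fderiv ℝ v (y + t • (x - y)) (x - y)) t := by
    have h1 : HasDerivAt (fun t : ℝ => y + t • (x - y)) (x - y) t := by
      simpa using ((hasDerivAt_id t).smul_const (x - y)).const_add y
    exact ht.hasFDerivAt.comp_hasDerivAt t h1
  rw [hd.deriv]
  exact fderiv_sq_le v _ _ h hxy

lemma lintegral_homothety {d : ℕ} (F : (Fin d → ℝ) → ENNReal) (hF : Measurable F)
    (s : ℝ) (hs : 1 / 2 ≤ s) (y : Fin d → ℝ) :
    ∫⁻ x, F (y + s • (x - y)) ≤ 2 ^ d * ∫⁻ x, F x := by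
  have hs0 : 0 < s := by linarith
  have e : ∫⁻ x, F (y + s • (x - y)) = ∫⁻ x, F (y + s • x) :=
    lintegral_sub_right_eq_self (fun x => F (y + s • x)) y
  rw [e]
  have e2 : ∫⁻ x, F (y + s • x) = ∫⁻ z, F (y + z) ∂(Measure.map (fun x : Fin d → ℝ => s • x) volume) := by
    rw [lintegral_map (by fun_prop) (by fun_prop)]
  rw [e2, Measure.map_addHaar_smul _ hs0.ne', lintegral_smul_measure,
    lintegral_add_left_eq_self, smul_eq_mul]
  gcongr
  simp only [Module.finrank_fintype_fun_eq_card, Fintype.card_fin]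
  rw [abs_of_nonneg (by positivity), ← inv_pow, ENNReal.ofReal_pow (by positivity)]
  gcongr
  have : s⁻¹ ≤ 2 := by
    rw [inv_le_comm₀ hs0 (by norm_num)]; linarith
  calc ENNReal.ofReal s⁻¹ ≤ ENNReal.ofReal 2 := ENNReal.ofReal_le_ofReal this
    _ = 2 := by simp

lemma setLIntegral_homothety {d : ℕ} (Q : Set (Fin d → ℝ)) (hQ : MeasurableSet Q)
    (hc : Convex ℝ Q) (G : (Fin d → ℝ) → ENNReal) (hG : Measurable G)
    (s : ℝ) (hs : 1 / 2 ≤ s) (hs1 : s ≤ 1) (y : Fin d → ℝ) (hy : y ∈ Q) :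
    ∫⁻ x in Q, G (y + s • (x - y)) ≤ 2 ^ d * ∫⁻ x in Q, G x := by
  rw [← lintegral_indicator hQ G]
  refine le_trans ?_ (lintegral_homothety _ (hG.indicator hQ) s hs y)
  rw [← lintegral_indicator hQ]
  apply lintegral_mono
  intro x
  by_cases hx : x ∈ Q
  · have : y + s • (x - y) ∈ Q := hc.add_smul_sub_mem hy hx ⟨by linarith, hs1⟩
    simp [hx, this]
  · simp [hx]

lemma double_bound {d : ℕ} (Q : Set (Fin d → ℝ)) (hQ : MeasurableSet Q)
    (hc : Convex ℝ Q) (G : (Fin d → ℝ) → ENNReal) (hG : Measurable G)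
    (t : ℝ) (ht : t ∈ Set.Ioc (0 : ℝ) 1) :
    ∫⁻ y in Q, ∫⁻ x in Q, G (y + t • (x - y)) ≤ volume Q * (2 ^ d * ∫⁻ x in Q, G x) := by
  rcases le_total (1 / 2) t with h | h
  · calc _ ≤ ∫⁻ y in Q, (2 ^ d * ∫⁻ x in Q, G x) := by
          apply setLIntegral_mono' hQ
          intro y hy
          exact setLIntegral_homothety Q hQ hc G hG t h ht.2 y hy
      _ = _ := by rw [setLIntegral_const, mul_comm]
  · rw [lintegral_lintegral_swap]
    swap
    · apply Measurable.aemeasurable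
      apply hG.comp
      fun_prop
    calc _ ≤ ∫⁻ x in Q, (2 ^ d * ∫⁻ x in Q, G x) := by
          apply setLIntegral_mono' hQ
          intro x hx
          have := setLIntegral_homothety Q hQ hc G hG (1 - t) (by linarith) (by linarith [ht.1]) x hx
          refine le_trans (le_of_eq ?_) this
          congr 1
          ext y
          congr 1
          module
      _ = _ := by rw [setLIntegral_const, mul_comm]

lemma ae_ae_diff {d : ℕ} {v : (Fin d → ℝ) → ℝ} {K : NNReal} (hv : LipschitzWith K v)
    (y : Fin d → ℝ) : ∀ᵐ x : Fin d → ℝ, ∀ᵐ t : ℝ, DifferentiableAt ℝ v (y + t • (x - y)) := by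
  have hm : MeasurableSet {p : (Fin d → ℝ) × ℝ | DifferentiableAt ℝ v (y + p.2 • (p.1 - y))} := by
    have : Measurable fun p : (Fin d → ℝ) × ℝ => y + p.2 • (p.1 - y) := by fun_prop
    exact this (measurableSet_of_differentiableAt ℝ v)
  rw [Measure.ae_ae_comm hm]
  have h0 : ∀ᵐ t : ℝ, t ≠ 0 := by simp [ae_iff]
  filter_upwards [h0] with t ht
  have hd := hv.ae_differentiableAt (μ := volume)
  rw [ae_iff] at hd ⊢
  set N := {z | ¬ DifferentiableAt ℝ v z}
  have h1 : volume ((fun x : Fin d → ℝ => t • x) ⁻¹' ((fun z => y + z) ⁻¹' N)) = 0 := by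
    rw [Measure.addHaar_preimage_smul _ ht, measure_preimage_add, hd, mul_zero]
  have h2 : volume ((fun x : Fin d → ℝ => x + (-y)) ⁻¹'
      ((fun x : Fin d → ℝ => t • x) ⁻¹' ((fun z => y + z) ⁻¹' N))) = 0 := by
    rw [measure_preimage_add_right, h1]
  convert h2 using 2
  ext x
  simp [N, sub_eq_add_neg]

lemma lipschitz_poincare_lintegral {d : ℕ} {v : (Fin d → ℝ) → ℝ} {K : NNReal}
    (hv : LipschitzWith K v) (Q : Set (Fin d → ℝ)) (hQ : MeasurableSet Q) (hc : Convex ℝ Q)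
    (h : ℝ) (hdiam : ∀ x ∈ Q, ∀ y ∈ Q, ∀ i, |x i - y i| ≤ h) :
    ∫⁻ y in Q, ∫⁻ x in Q, ENNReal.ofReal ((v x - v y) ^ 2) ≤
      ENNReal.ofReal (d * h ^ 2) * (volume Q * (2 ^ d * ∫⁻ x in Q, ENNReal.ofReal (gradSq v x))) := by
  set G : (Fin d → ℝ) → ENNReal := fun z => ENNReal.ofReal (gradSq v z) with hGdef
  have hG : Measurable G := (measurable_gradSq v).ennreal_ofReal
  calc ∫⁻ y in Q, ∫⁻ x in Q, ENNReal.ofReal ((v x - v y) ^ 2)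
      ≤ ∫⁻ y in Q, ∫⁻ x in Q, ENNReal.ofReal (d * h ^ 2) *
          ∫⁻ t in Set.Ioc (0 : ℝ) 1, G (y + t • (x - y)) := by
        apply setLIntegral_mono' hQ
        intro y hy
        apply lintegral_mono_ae
        filter_upwards [ae_restrict_of_ae (ae_ae_diff hv y), ae_restrict_mem hQ] with x hx hxQ
        exact seg_bound hv x y h (hdiam x hxQ y hy) hx
    _ = ENNReal.ofReal (d * h ^ 2) * ∫⁻ y in Q, ∫⁻ x in Q,
          ∫⁻ t in Set.Ioc (0 : ℝ) 1, G (y + t • (x - y)) := by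
        rw [← lintegral_const_mul' _ _ ENNReal.ofReal_ne_top]
        congr 1; ext y
        rw [← lintegral_const_mul' _ _ ENNReal.ofReal_ne_top]
    _ = ENNReal.ofReal (d * h ^ 2) * ∫⁻ t in Set.Ioc (0 : ℝ) 1, ∫⁻ y in Q, ∫⁻ x in Q,
          G (y + t • (x - y)) := by
        congr 1
        have e : ∀ y : Fin d → ℝ, ∫⁻ x in Q, ∫⁻ t in Set.Ioc (0 : ℝ) 1, G (y + t • (x - y)) =
            ∫⁻ t in Set.Ioc (0 : ℝ) 1, ∫⁻ x in Q, G (y + t • (x - y)) := by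
          intro y
          rw [lintegral_lintegral_swap]
          apply Measurable.aemeasurable
          apply hG.comp
          fun_prop
        simp_rw [e]
        rw [lintegral_lintegral_swap]
        apply Measurable.aemeasurable
        have : Measurable fun p : ((Fin d → ℝ) × ℝ) × (Fin d → ℝ) =>
            G (p.1.1 + p.1.2 • (p.2 - p.1.1)) := by
          apply hG.comp
          fun_prop
        exact this.lintegral_prod_right'
    _ ≤ ENNReal.ofReal (d * h ^ 2) * ∫⁻ t in Set.Ioc (0 : ℝ) 1,
          (volume Q * (2 ^ d * ∫⁻ x in Q, G x)) := by
        refine mul_le_mul_right ?_ _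
        apply setLIntegral_mono' measurableSet_Ioc
        intro t ht
        exact double_bound Q hQ hc G hG t ht
    _ = _ := by simp

/-- Poincaré inequality for mean-zero Lipschitz functions on a bounded convex set. -/
lemma lipschitz_poincare {d : ℕ} {v : (Fin d → ℝ) → ℝ} {K : NNReal}
    (hv : LipschitzWith K v) (Q : Set (Fin d → ℝ)) (hQ : MeasurableSet Q) (hc : Convex ℝ Q)
    (hb : Bornology.IsBounded Q) (hpos : 0 < volume Q)
    (h : ℝ) (hdiam : ∀ x ∈ Q, ∀ y ∈ Q, ∀ i, |x i - y i| ≤ h)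
    (hmean : ∫ x in Q, v x = 0) :
    ∫ x in Q, (v x) ^ 2 ≤ (d * 2 ^ d) * h ^ 2 * ∫ x in Q, gradSq v x := by
  have hfin : volume Q < ⊤ := hb.measure_lt_top
  haveI : IsFiniteMeasure (volume.restrict Q) := ⟨by simpa using hfin⟩
  have hi1 : ∀ f : (Fin d → ℝ) → ℝ, Continuous f → Integrable f (volume.restrict Q) := by
    intro f hf
    have : IntegrableOn f (closure Q) := hf.continuousOn.integrableOn_compact hb.isCompact_closure
    exact this.mono_set subset_closure
  have hvc := hv.continuous
  have hgi : Integrable (gradSq v) (volume.restrict Q) := by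
    refine Integrable.of_bound (measurable_gradSq v).aestronglyMeasurable (d * (K : ℝ) ^ 2)
      (ae_of_all _ fun x => ?_)
    rw [Real.norm_of_nonneg (gradSq_nonneg v x)]
    exact gradSq_le hv x
  have hin : ∀ y, ∫ x in Q, (v x - v y) ^ 2 = (∫ x in Q, (v x) ^ 2) + (volume Q).toReal * (v y) ^ 2 := by
    intro y
    have : ∀ x, (v x - v y) ^ 2 = ((v x) ^ 2 - (2 * v y) * v x) + (v y) ^ 2 := fun x => by ring
    simp_rw [this]
    rw [integral_add (hi1 _ (by fun_prop)) (hi1 _ (by fun_prop)),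
      integral_sub (hi1 _ (by fun_prop)) (hi1 _ (by fun_prop)), integral_const_mul, hmean]
    simp [Measure.real]
  have hdbl : ∫⁻ y in Q, ∫⁻ x in Q, ENNReal.ofReal ((v x - v y) ^ 2) =
      ENNReal.ofReal (2 * (volume Q).toReal * ∫ x in Q, (v x) ^ 2) := by
    have : ∀ y, ∫⁻ x in Q, ENNReal.ofReal ((v x - v y) ^ 2) = ENNReal.ofReal
        ((∫ x in Q, (v x) ^ 2) + (volume Q).toReal * (v y) ^ 2) := by
      intro y
      rw [← ofReal_integral_eq_lintegral_ofReal (hi1 _ (by fun_prop))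
        (ae_of_all _ fun x => sq_nonneg _), hin]
    simp_rw [this]
    rw [← ofReal_integral_eq_lintegral_ofReal (hi1 _ (by fun_prop)) (ae_of_all _ fun x => ?_)]
    · rw [integral_add (hi1 _ (by fun_prop)) (hi1 _ (by fun_prop)), integral_const_mul]
      simp only [integral_const, Measure.real, Measure.restrict_apply_univ, smul_eq_mul]
      congr 1; ring
    · have : 0 ≤ ∫ x in Q, (v x) ^ 2 := integral_nonneg fun x => sq_nonneg _
      positivity
  have key := lipschitz_poincare_lintegral hv Q hQ hc h hdiam
  rw [hdbl, ← ofReal_integral_eq_lintegral_ofReal hgi (ae_of_all _ (gradSq_nonneg v))] at key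
  set q := (volume Q).toReal with hq
  have hq0 : 0 < q := ENNReal.toReal_pos hpos.ne' hfin.ne
  have hgn : 0 ≤ ∫ x in Q, gradSq v x := integral_nonneg (gradSq_nonneg v)
  have e2 : (2 : ENNReal) ^ d = ENNReal.ofReal (2 ^ d) := by
    rw [ENNReal.ofReal_pow (by norm_num)]; simp
  have e3 : volume Q = ENNReal.ofReal q := (ENNReal.ofReal_toReal hfin.ne).symm
  rw [e2, e3, ← ENNReal.ofReal_mul (by positivity), ← ENNReal.ofReal_mul (by positivity),
    ← ENNReal.ofReal_mul (by positivity), ENNReal.ofReal_le_ofReal_iff (by positivity)] at key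
  have hvn : 0 ≤ ∫ x in Q, (v x) ^ 2 := integral_nonneg fun x => sq_nonneg _
  refine le_of_mul_le_mul_left ?_ hq0
  nlinarith [mul_nonneg hq0.le hvn]

/-! ### Positivity of the `L²` norm -/

lemma unitCell_bounded (d : ℕ) : Bornology.IsBounded (unitCell d) :=
  Bornology.IsBounded.pi fun _ => Metric.isBounded_Ico 0 1

lemma unitCell_measurable (d : ℕ) : MeasurableSet (unitCell d) :=
  MeasurableSet.univ_pi fun _ => measurableSet_Ico

lemma integrableOn_of_continuous {d : ℕ} {Q : Set (Fin d → ℝ)} (hb : Bornology.IsBounded Q)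
    {f : (Fin d → ℝ) → ℝ} (hf : Continuous f) : IntegrableOn f Q :=
  (hf.continuousOn.integrableOn_compact hb.isCompact_closure).mono_set subset_closure

lemma l2sq_pos {d : ℕ} {v : (Fin d → ℝ) → ℝ} (hp : ZPeriodic v) (hc : Continuous v)
    (hne : v ≠ 0) : 0 < l2sq v := by
  have h0 : 0 ≤ l2sq v := integral_nonneg fun x => sq_nonneg _
  rcases h0.lt_or_eq with h | h
  · exact h
  exfalso
  apply hne
  have hae : (fun x => (v x) ^ 2) =ᵐ[volume.restrict (unitCell d)] 0 := by
    rw [← integral_eq_zero_iff_of_nonneg (fun x => sq_nonneg _)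
      (integrableOn_of_continuous (unitCell_bounded d) (hc.pow 2))]
    exact h.symm
  set U : Set (Fin d → ℝ) := Set.univ.pi fun _ => Set.Ioo (0 : ℝ) 1 with hU
  have hsub : U ⊆ unitCell d := Set.pi_mono fun i _ => Set.Ioo_subset_Ico_self
  have hUo : IsOpen U := isOpen_set_pi Set.finite_univ fun i _ => isOpen_Ioo
  have hEq : Set.EqOn v (fun _ => 0) U := by
    apply Measure.eqOn_open_of_ae_eq (μ := volume) _ hUo hc.continuousOn continuousOn_const
    filter_upwards [ae_restrict_of_ae_restrict_of_subset hsub hae] with x hx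
    simpa using hx
  have hEq2 := hEq.closure hc continuous_const
  have hcl : closure U = Set.univ.pi fun _ => Set.Icc (0 : ℝ) 1 := by
    rw [hU, closure_pi_set]
    simp [closure_Ioo]
  rw [hcl] at hEq2
  funext x
  have h1 := hp (fun i => Int.fract (x i)) (fun i => ⌊x i⌋)
  have h2 : ((fun i => Int.fract (x i)) + fun i => ((⌊x i⌋ : ℤ) : ℝ)) = x := by
    funext i; simp [Int.fract_add_floor]
  rw [h2] at h1
  rw [h1]
  apply hEq2
  intro i _
  exact ⟨Int.fract_nonneg _, (Int.fract_lt_one _).le⟩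

/-! ### Boxes -/

/-- Left end point of the subinterval number `r` of the `p`-th valley. -/
def cornerPt (ε : ℝ) (ℓ : ℕ) (p r : ℕ) : ℝ := 2 * p * ε + r * (ε / ℓ)

lemma corner_mem {ε : ℝ} (hε : 0 < ε) {ℓ : ℕ} (hℓ : 0 < ℓ) {p r : ℕ} (hr : r < ℓ) {x : ℝ}
    (hx : x ∈ Set.Ico (cornerPt ε ℓ p r) (cornerPt ε ℓ p r + ε / ℓ)) :
    ⌊x / ε⌋ = 2 * (p : ℤ) ∧ ⌊(x / ε - 2 * p) * ℓ⌋ = (r : ℤ) := by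
  have hl : (0 : ℝ) < ℓ := by exact_mod_cast hℓ
  obtain ⟨h1, h2⟩ := hx
  unfold cornerPt at h1 h2
  have hr' : (r : ℝ) + 1 ≤ ℓ := by exact_mod_cast hr
  have a1 : (r : ℝ) ≤ (x / ε - 2 * p) * ℓ := by
    have : x / ε - 2 * p ≥ r / ℓ := by
      rw [ge_iff_le, le_sub_iff_add_le, le_div_iff₀ hε]
      refine le_trans (le_of_eq ?_) h1
      field_simp; ring
    calc (r : ℝ) = r / ℓ * ℓ := by field_simp
      _ ≤ _ := by gcongr
  have a2 : (x / ε - 2 * p) * ℓ < r + 1 := by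
    have : x / ε - 2 * p < (r + 1) / ℓ := by
      rw [sub_lt_iff_lt_add, div_lt_iff₀ hε]
      refine lt_of_lt_of_le h2 (le_of_eq ?_)
      field_simp; ring
    calc (x / ε - 2 * p) * ℓ < (r + 1) / ℓ * ℓ := by gcongr
      _ = _ := by field_simp
  constructor
  · rw [Int.floor_eq_iff]
    push_cast
    have hr0 : (0 : ℝ) ≤ r := by positivity
    constructor
    · by_contra hcon
      push Not at hcon
      nlinarith
    · by_contra hcon
      push Not at hcon
      nlinarith
  · rw [Int.floor_eq_iff]
    push_cast
    exact ⟨a1, a2⟩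

lemma exists_corner {ε : ℝ} (hε : 0 < ε) {ℓ m : ℕ} (hℓ : 0 < ℓ) (hm : 2 * ε * (m : ℝ) = 1)
    {x : ℝ} (hx : x ∈ Set.Ico (0 : ℝ) 1) (he : Even ⌊x / ε⌋) :
    ∃ k : Fin m × Fin ℓ, x ∈ Set.Ico (cornerPt ε ℓ k.1 k.2) (cornerPt ε ℓ k.1 k.2 + ε / ℓ) := by
  have hl : (0 : ℝ) < ℓ := by exact_mod_cast hℓ
  obtain ⟨n, hn⟩ := he
  have h0 : 0 ≤ x / ε := div_nonneg hx.1 hε.le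
  have h1 : x / ε < 2 * m := by
    rw [div_lt_iff₀ hε]; linarith [hx.2]
  have hf0 : 0 ≤ ⌊x / ε⌋ := Int.floor_nonneg.2 h0
  have hfl := Int.floor_le (x / ε)
  have hfl2 := Int.lt_floor_add_one (x / ε)
  have hn0 : 0 ≤ n := by omega
  lift n to ℕ using hn0
  have hnm : n < m := by
    have : ((⌊x / ε⌋ : ℤ) : ℝ) < 2 * m := lt_of_le_of_lt hfl h1
    have : ⌊x / ε⌋ < 2 * (m : ℤ) := by exact_mod_cast this
    omega
  rw [hn] at hfl hfl2
  push_cast at hfl hfl2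
  set u := (x / ε - 2 * n) * ℓ with hu
  have hu0 : 0 ≤ u := mul_nonneg (by linarith) hl.le
  have hul : u < ℓ := by
    calc u < 1 * ℓ := by rw [hu]; gcongr; linarith
      _ = ℓ := one_mul _
  have hr : ⌊u⌋₊ < ℓ := (Nat.floor_lt hu0).2 hul
  refine ⟨(⟨n, hnm⟩, ⟨⌊u⌋₊, hr⟩), ?_⟩
  have b1 := Nat.floor_le hu0
  have b2 := Nat.lt_floor_add_one u
  have hx' : x = 2 * n * ε + u * (ε / ℓ) := by
    rw [hu]; field_simp; ring
  have hel : 0 < ε / ℓ := by positivity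
  simp only [cornerPt]
  generalize (⌊u⌋₊ : ℝ) = f at *
  constructor
  · calc _ ≤ 2 * n * ε + u * (ε / ℓ) := by gcongr
      _ = x := hx'.symm
  · calc x = 2 * n * ε + u * (ε / ℓ) := hx'
      _ < 2 * n * ε + (f + 1) * (ε / ℓ) := by gcongr
      _ = _ := by ring

lemma corner_sub_unit {ε : ℝ} (hε : 0 < ε) {ℓ m : ℕ} (hℓ : 0 < ℓ) (hm : 2 * ε * (m : ℝ) = 1)
    (k : Fin m × Fin ℓ) :
    Set.Ico (cornerPt ε ℓ k.1 k.2) (cornerPt ε ℓ k.1 k.2 + ε / ℓ) ⊆ Set.Ico (0 : ℝ) 1 := by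
  intro x hx
  have hl : (0 : ℝ) < ℓ := by exact_mod_cast hℓ
  obtain ⟨h1, -⟩ := corner_mem hε hℓ k.2.2 hx
  rw [Int.floor_eq_iff] at h1
  push_cast at h1
  have hk : ((k.1 : ℕ) : ℝ) + 1 ≤ m := by exact_mod_cast k.1.2
  have hk0 : (0 : ℝ) ≤ ((k.1 : ℕ) : ℝ) := by positivity
  obtain ⟨h1, h2⟩ := h1
  rw [le_div_iff₀ hε] at h1
  rw [div_lt_iff₀ hε] at h2
  constructor
  · nlinarith
  · nlinarith

/-- The box with multi-index `k`. -/
def subBox {d : ℕ} (ε : ℝ) (ℓ m : ℕ) (k : Fin d → Fin m × Fin ℓ) : Set (Fin d → ℝ) :=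
  Set.univ.pi fun i => Set.Ico (cornerPt ε ℓ (k i).1 (k i).2) (cornerPt ε ℓ (k i).1 (k i).2 + ε / ℓ)

lemma subBox_disjoint {d : ℕ} {ε : ℝ} (hε : 0 < ε) {ℓ m : ℕ} (hℓ : 0 < ℓ) :
    Pairwise (Function.onFun Disjoint (subBox (d := d) ε ℓ m)) := by
  intro k k' hne
  refine Set.disjoint_left.2 fun x hx hx' => hne ?_
  funext i
  obtain ⟨h1, h2⟩ := corner_mem hε hℓ (k i).2.2 (hx i trivial)
  obtain ⟨h1', h2'⟩ := corner_mem hε hℓ (k' i).2.2 (hx' i trivial)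
  have e1 : ((k i).1 : ℕ) = (k' i).1 := by omega
  rw [← e1, h2] at h2'
  have e2 : ((k i).2 : ℕ) = (k' i).2 := by exact_mod_cast h2'
  exact Prod.ext (Fin.ext e1) (Fin.ext e2)

lemma subBox_measurable {d : ℕ} (ε : ℝ) (ℓ m : ℕ) (k : Fin d → Fin m × Fin ℓ) :
    MeasurableSet (subBox ε ℓ m k) := MeasurableSet.univ_pi fun _ => measurableSet_Ico

lemma subBox_subset {d : ℕ} {ε : ℝ} (hε : 0 < ε) {ℓ m : ℕ} (hℓ : 0 < ℓ) (hm : 2 * ε * (m : ℝ) = 1)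
    (k : Fin d → Fin m × Fin ℓ) : subBox ε ℓ m k ⊆ unitCell d :=
  Set.pi_mono fun i _ => corner_sub_unit hε hℓ hm (k i)

lemma subBox_poincare {d : ℕ} {v : (Fin d → ℝ) → ℝ} {K : NNReal} (hv : LipschitzWith K v)
    {ε : ℝ} (hε : 0 < ε) {ℓ m : ℕ} (hℓ : 0 < ℓ) (hm : 2 * ε * (m : ℝ) = 1)
    (k : Fin d → Fin m × Fin ℓ) (hmean : ∫ x in subBox ε ℓ m k, v x = 0) :
    ∫ x in subBox ε ℓ m k, (v x) ^ 2 ≤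
      (d * 2 ^ d) * (ε / ℓ) ^ 2 * ∫ x in subBox ε ℓ m k, gradSq v x := by
  have hl : (0 : ℝ) < ℓ := by exact_mod_cast hℓ
  have hel : 0 < ε / ℓ := by positivity
  apply lipschitz_poincare hv _ (subBox_measurable ε ℓ m k) _
    ((unitCell_bounded d).subset (subBox_subset hε hℓ hm k)) _ _ _ hmean
  · exact convex_pi fun i _ => convex_Ico _ _
  · unfold subBox
    rw [volume_pi_pi]
    simp only [Real.volume_Ico]
    apply pos_iff_ne_zero.2
    rw [Finset.prod_ne_zero_iff]
    intro i _
    simpa using hel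
  · intro x hx y hy i
    have h1 := hx i trivial
    have h2 := hy i trivial
    rw [abs_le]
    constructor <;> linarith [h1.1, h1.2, h2.1, h2.2]

lemma sum_subBox {d : ℕ} {v : (Fin d → ℝ) → ℝ} {K : NNReal} (hv : LipschitzWith K v)
    {ε : ℝ} (hε : 0 < ε) {ℓ m : ℕ} (hℓ : 0 < ℓ) (hm : 2 * ε * (m : ℝ) = 1)
    (hmean : ∀ k, ∫ x in subBox (d := d) ε ℓ m k, v x = 0) :
    ∫ x in unitCell d ∩ {x | ∀ i, Even ⌊x i / ε⌋}, (v x) ^ 2 ≤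
      (d * 2 ^ d) * (ε / ℓ) ^ 2 * ∫ x in unitCell d, gradSq v x := by
  have hvc := hv.continuous
  have hsubU : (⋃ k, subBox (d := d) ε ℓ m k) ⊆ unitCell d :=
    Set.iUnion_subset fun k => subBox_subset hε hℓ hm k
  have hi : IntegrableOn (fun x => (v x) ^ 2) (unitCell d) :=
    integrableOn_of_continuous (unitCell_bounded d) (by fun_prop)
  have hfin : volume (unitCell d) < ⊤ := (unitCell_bounded d).measure_lt_top
  have : IsFiniteMeasure (volume.restrict (unitCell d)) := ⟨by simpa using hfin⟩
  have hg : IntegrableOn (gradSq v) (unitCell d) := by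
    refine Integrable.of_bound (measurable_gradSq v).aestronglyMeasurable (d * (K : ℝ) ^ 2)
      (ae_of_all _ fun x => ?_)
    rw [Real.norm_of_nonneg (gradSq_nonneg v x)]
    exact gradSq_le hv x
  calc ∫ x in unitCell d ∩ {x | ∀ i, Even ⌊x i / ε⌋}, (v x) ^ 2
      ≤ ∫ x in ⋃ k, subBox (d := d) ε ℓ m k, (v x) ^ 2 := by
        apply setIntegral_mono_set (hi.mono_set hsubU) (ae_of_all _ fun x => sq_nonneg _)
        apply LE.le.eventuallyLE
        intro x hx
        choose k hk using fun i => exists_corner hε hℓ hm (hx.1 i trivial) (hx.2 i)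
        exact Set.mem_iUnion.2 ⟨k, fun i _ => hk i⟩
    _ = ∑ k, ∫ x in subBox (d := d) ε ℓ m k, (v x) ^ 2 :=
        integral_iUnion_fintype (fun k => subBox_measurable ε ℓ m k) (subBox_disjoint hε hℓ)
          fun k => hi.mono_set (subBox_subset hε hℓ hm k)
    _ ≤ ∑ k, (d * 2 ^ d) * (ε / ℓ) ^ 2 * ∫ x in subBox (d := d) ε ℓ m k, gradSq v x :=
        Finset.sum_le_sum fun k _ => subBox_poincare hv hε hℓ hm k (hmean k)
    _ = (d * 2 ^ d) * (ε / ℓ) ^ 2 * ∫ x in ⋃ k, subBox (d := d) ε ℓ m k, gradSq v x := by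
        rw [← Finset.mul_sum, integral_iUnion_fintype (fun k => subBox_measurable ε ℓ m k)
          (subBox_disjoint hε hℓ) fun k => hg.mono_set (subBox_subset hε hℓ hm k)]
    _ ≤ _ := by
        refine mul_le_mul_of_nonneg_left ?_ (by positivity)
        exact setIntegral_mono_set hg (ae_of_all _ (gradSq_nonneg v)) hsubU.eventuallyLE

open scoped Classical in
lemma energy_lower {d : ℕ} {v : (Fin d → ℝ) → ℝ} {K : NNReal} (hv : LipschitzWith K v)
    {ε α β : ℝ} (hε : 0 < ε) (hα : 0 ≤ α) (hαβ : α ≤ β) {ℓ m : ℕ} (hℓ : 2 ≤ ℓ)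
    (hm : 2 * ε * (m : ℝ) = 1)
    {V : (Fin d → ℝ) → ℝ} (hV : ∀ x : Fin d → ℝ, V x = if ∀ i, Even ⌊x i / ε⌋ then α else β)
    (hβ : ((ℓ : ℝ) - 1) ^ 2 / ε ^ 2 ≤ β)
    (hmean : ∀ k, ∫ x in subBox (d := d) ε ℓ m k, v x = 0) :
    ((ℓ : ℝ) - 1) ^ 2 / ε ^ 2 * l2sq v ≤ (d * 2 ^ d + 1) * energySq V v := by
  have hvc := hv.continuous
  have hℓ' : (2 : ℝ) ≤ ℓ := by exact_mod_cast hℓ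
  set A : Set (Fin d → ℝ) := {x | ∀ i, Even ⌊x i / ε⌋} with hA
  have hAm : MeasurableSet A := by
    have : A = ⋂ i, (fun x : Fin d → ℝ => ⌊x i / ε⌋) ⁻¹' {n | Even n} := by
      ext x; simp [hA]
    rw [this]
    refine MeasurableSet.iInter fun i => ?_
    have hmeas : Measurable (fun x : Fin d → ℝ => ⌊x i / ε⌋) :=
      Int.measurable_floor.comp (by fun_prop)
    exact hmeas (by measurability)
  have hi : IntegrableOn (fun x => (v x) ^ 2) (unitCell d) :=
    integrableOn_of_continuous (unitCell_bounded d) (by fun_prop)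
  have hfin : volume (unitCell d) < ⊤ := (unitCell_bounded d).measure_lt_top
  have : IsFiniteMeasure (volume.restrict (unitCell d)) := ⟨by simpa using hfin⟩
  have hg : IntegrableOn (gradSq v) (unitCell d) := by
    refine Integrable.of_bound (measurable_gradSq v).aestronglyMeasurable (d * (K : ℝ) ^ 2)
      (ae_of_all _ fun x => ?_)
    rw [Real.norm_of_nonneg (gradSq_nonneg v x)]
    exact gradSq_le hv x
  have hVm : Measurable V := by
    have : V = A.piecewise (fun _ => α) (fun _ => β) := by
      funext x; rw [hV]; simp [Set.piecewise, hA]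
    rw [this]
    exact Measurable.piecewise hAm measurable_const measurable_const
  have hVb : ∀ x, 0 ≤ V x ∧ V x ≤ β := by
    intro x; rw [hV]; split_ifs
    · exact ⟨hα, hαβ⟩
    · exact ⟨hα.trans hαβ, le_rfl⟩
  have hVi : IntegrableOn (fun x => V x * (v x) ^ 2) (unitCell d) := by
    refine Integrable.bdd_mul (c := β) hi hVm.aestronglyMeasurable (ae_of_all _ fun x => ?_)
    rw [Real.norm_of_nonneg (hVb x).1]
    exact (hVb x).2
  have hE : energySq V v = (∫ x in unitCell d, gradSq v x) + ∫ x in unitCell d, V x * (v x) ^ 2 :=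
    integral_add hg hVi
  have hsplit : l2sq v = (∫ x in unitCell d ∩ A, (v x) ^ 2) + ∫ x in unitCell d \ A, (v x) ^ 2 :=
    (integral_inter_add_sdiff hAm hi).symm
  have h1 := sum_subBox hv hε (by omega) hm hmean
  have h2 : β * ∫ x in unitCell d \ A, (v x) ^ 2 ≤ ∫ x in unitCell d, V x * (v x) ^ 2 := by
    rw [← integral_const_mul]
    calc ∫ x in unitCell d \ A, β * (v x) ^ 2 = ∫ x in unitCell d \ A, V x * (v x) ^ 2 := by
          apply setIntegral_congr_fun ((unitCell_measurable d).diff hAm)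
          intro x hx
          have : ¬ ∀ i, Even ⌊x i / ε⌋ := hx.2
          simp only [hV, if_neg this]
      _ ≤ _ := setIntegral_mono_set hVi
          (ae_of_all _ fun x => mul_nonneg (hVb x).1 (sq_nonneg _))
          Set.sdiff_subset.eventuallyLE
  have hgn : 0 ≤ ∫ x in unitCell d, gradSq v x := integral_nonneg (gradSq_nonneg v)
  have hVn : 0 ≤ ∫ x in unitCell d, V x * (v x) ^ 2 :=
    integral_nonneg fun x => mul_nonneg (hVb x).1 (sq_nonneg _)
  have hBn : 0 ≤ ∫ x in unitCell d \ A, (v x) ^ 2 := integral_nonneg fun x => sq_nonneg _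
  rw [hE, hsplit]
  set I1 := ∫ x in unitCell d ∩ A, (v x) ^ 2
  set I2 := ∫ x in unitCell d \ A, (v x) ^ 2
  set g := ∫ x in unitCell d, gradSq v x
  set W := ∫ x in unitCell d, V x * (v x) ^ 2
  set k := ((ℓ : ℝ) - 1) ^ 2 / ε ^ 2 with hk
  have hk0 : 0 ≤ k := by positivity
  have hkl : k * (ε / ℓ) ^ 2 ≤ 1 := by
    have : k * (ε / ℓ) ^ 2 = (((ℓ : ℝ) - 1) / ℓ) ^ 2 := by
      rw [hk]; field_simp
    rw [this]
    apply pow_le_one₀ (div_nonneg (by linarith) (by linarith))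
    rw [div_le_one (by linarith)]; linarith
  have hC : (0 : ℝ) ≤ d * 2 ^ d := by positivity
  set C : ℝ := d * 2 ^ d
  have s1 : k * I1 ≤ C * g := by
    calc k * I1 ≤ k * (C * (ε / ℓ) ^ 2 * g) := by gcongr
      _ = (k * (ε / ℓ) ^ 2) * (C * g) := by ring
      _ ≤ 1 * (C * g) := by gcongr
      _ = C * g := one_mul _
  have s2 : k * I2 ≤ W := le_trans (by gcongr) h2
  nlinarith [mul_nonneg hC hVn]

/-! ### Existence of admissible subspaces -/

/-- Powers of a sine of the coordinate `i₀`. -/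
def sinPow {d : ℕ} (i₀ : Fin d) (n : ℕ) : Fin n → (Fin d → ℝ) → ℝ :=
  fun k x => Real.sin (2 * π * x i₀) ^ (k : ℕ)

/-- Linear combinations of powers of a sine. -/
def sinComb {d : ℕ} (i₀ : Fin d) (n : ℕ) : (Fin n → ℝ) →ₗ[ℝ] ((Fin d → ℝ) → ℝ) :=
  Fintype.linearCombination ℝ (sinPow i₀ n)

lemma sinComb_apply {d : ℕ} (i₀ : Fin d) (n : ℕ) (a : Fin n → ℝ) (x : Fin d → ℝ) :
    sinComb i₀ n a x = ∑ k, a k * Real.sin (2 * π * x i₀) ^ (k : ℕ) := by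
  simp [sinComb, Fintype.linearCombination_apply, sinPow]

lemma sinComb_periodic {d : ℕ} (i₀ : Fin d) (n : ℕ) (a : Fin n → ℝ) :
    ZPeriodic (sinComb i₀ n a) := by
  intro x k
  rw [sinComb_apply, sinComb_apply]
  have : Real.sin (2 * π * (x + fun i => (k i : ℝ)) i₀) = Real.sin (2 * π * x i₀) := by
    have e : 2 * π * (x + fun i => (k i : ℝ)) i₀ = 2 * π * x i₀ + (k i₀ : ℝ) * (2 * π) := by
      simp only [Pi.add_apply]; ring
    rw [e, Real.sin_add_int_mul_two_pi]
  rw [this]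

lemma sinComb_abs_le {d : ℕ} (i₀ : Fin d) (n : ℕ) (a : Fin n → ℝ) (x : Fin d → ℝ) :
    |sinComb i₀ n a x| ≤ n * ‖a‖ := by
  rw [sinComb_apply]
  refine (Finset.abs_sum_le_sum_abs _ _).trans ?_
  have : ∀ k ∈ (Finset.univ : Finset (Fin n)),
      |a k * Real.sin (2 * π * x i₀) ^ (k : ℕ)| ≤ ‖a‖ := by
    intro k _
    rw [abs_mul, abs_pow]
    have h1 : |a k| ≤ ‖a‖ := norm_le_pi_norm a k
    have h2 : |Real.sin (2 * π * x i₀)| ^ (k : ℕ) ≤ 1 :=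
      pow_le_one₀ (abs_nonneg _) (Real.abs_sin_le_one _)
    nlinarith [abs_nonneg (a k), norm_nonneg a]
  refine (Finset.sum_le_sum this).trans ?_
  simp

lemma sinComb_lipschitz {d : ℕ} (i₀ : Fin d) (n : ℕ) (a : Fin n → ℝ) :
    LipschitzWith (Real.toNNReal (n * (‖a‖ * (n * (2 * π))))) (sinComb i₀ n a) := by
  refine LipschitzWith.of_dist_le_mul fun x y => ?_
  rw [Real.coe_toNNReal _ (by positivity), Real.dist_eq, sinComb_apply, sinComb_apply,
    ← Finset.sum_sub_distrib]
  refine (Finset.abs_sum_le_sum_abs _ _).trans ?_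
  have hs : |Real.sin (2 * π * x i₀) - Real.sin (2 * π * y i₀)| ≤ 2 * π * dist x y := by
    have h1 := Real.lipschitzWith_sin.dist_le_mul (2 * π * x i₀) (2 * π * y i₀)
    rw [Real.dist_eq, Real.dist_eq, ← mul_sub, abs_mul, abs_of_pos Real.two_pi_pos] at h1
    have h2 : |x i₀ - y i₀| ≤ dist x y := dist_le_pi_dist x y i₀
    refine h1.trans ?_
    simp only [NNReal.coe_one, one_mul]
    gcongr
  have : ∀ k ∈ (Finset.univ : Finset (Fin n)),
      |a k * Real.sin (2 * π * x i₀) ^ (k : ℕ) - a k * Real.sin (2 * π * y i₀) ^ (k : ℕ)|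
        ≤ ‖a‖ * (n * (2 * π * dist x y)) := by
    intro k _
    rw [← mul_sub, abs_mul]
    have h1 : |a k| ≤ ‖a‖ := norm_le_pi_norm a k
    have h2 := abs_pow_sub_pow_le (Real.sin (2 * π * x i₀)) (Real.sin (2 * π * y i₀)) (k : ℕ)
    have h3 : max |Real.sin (2 * π * x i₀)| |Real.sin (2 * π * y i₀)| ^ ((k : ℕ) - 1) ≤ 1 :=
      pow_le_one₀ (le_max_of_le_left (abs_nonneg _))
        (max_le (Real.abs_sin_le_one _) (Real.abs_sin_le_one _))
    have hk : ((k : ℕ) : ℝ) ≤ n := by exact_mod_cast k.2.le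
    gcongr
    calc _ ≤ _ := h2
      _ ≤ (2 * π * dist x y) * n * 1 := by gcongr
      _ = _ := by ring
  refine (Finset.sum_le_sum this).trans (le_of_eq ?_)
  simp
  ring

lemma sinComb_injective {d : ℕ} (i₀ : Fin d) (n : ℕ) (a : Fin n → ℝ)
    (h : sinComb i₀ n a = 0) : a = 0 := by
  set p := (Polynomial.degreeLTEquiv ℝ n).symm a with hp
  have hev : ∀ s : ℝ, (p : Polynomial ℝ).eval s = ∑ i, a i * s ^ (i : ℕ) := by
    intro s
    rw [Polynomial.eval_eq_sum_degreeLTEquiv p.2]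
    simp [hp]
  have h0 : (p : Polynomial ℝ) = 0 := by
    apply Polynomial.eq_zero_of_infinite_isRoot
    refine Set.Infinite.mono ?_ (Set.Icc_infinite (show (-1 : ℝ) < 1 by norm_num))
    intro s hs
    have h1 := congrFun h (fun _ => Real.arcsin s / (2 * π))
    rw [sinComb_apply] at h1
    have e : 2 * π * (Real.arcsin s / (2 * π)) = Real.arcsin s := by
      field_simp
    simp only [e, Real.sin_arcsin hs.1 hs.2] at h1
    rw [Set.mem_setOf_eq, Polynomial.IsRoot.def, hev]
    exact h1
  have h1 : p = 0 := Subtype.ext h0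
  rw [hp] at h1
  simpa using h1

lemma sinComb_memLp {d : ℕ} (i₀ : Fin d) (n : ℕ) (a : Fin n → ℝ) :
    MemLp (sinComb i₀ n a) 2 (volume.restrict (unitCell d)) := by
  have hfin : volume (unitCell d) < ⊤ := (unitCell_bounded d).measure_lt_top
  have : IsFiniteMeasure (volume.restrict (unitCell d)) := ⟨by simpa using hfin⟩
  exact MemLp.of_bound (sinComb_lipschitz i₀ n a).continuous.aestronglyMeasurable (n * ‖a‖)
    (ae_of_all _ (sinComb_abs_le i₀ n a))

/-- The combination map as a map into `L²`. -/
def sinLp {d : ℕ} (i₀ : Fin d) (n : ℕ) :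
    (Fin n → ℝ) →ₗ[ℝ] Lp ℝ 2 (volume.restrict (unitCell d)) where
  toFun a := (sinComb_memLp i₀ n a).toLp _
  map_add' a b := by
    rw [← MemLp.toLp_add]
    simp only [map_add]
  map_smul' c a := by
    rw [RingHom.id_apply, ← MemLp.toLp_const_smul]
    simp only [map_smul]

lemma sinLp_norm {d : ℕ} (i₀ : Fin d) (n : ℕ) (a : Fin n → ℝ) :
    ‖sinLp i₀ n a‖ ^ 2 = l2sq (sinComb i₀ n a) := by
  rw [← real_inner_self_eq_norm_sq, MeasureTheory.L2.inner_def, l2sq]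
  apply integral_congr_ae
  filter_upwards [(sinComb_memLp i₀ n a).coeFn_toLp] with x hx
  have : (sinLp i₀ n a : (Fin d → ℝ) → ℝ) x = sinComb i₀ n a x := hx
  rw [this]
  simp [pow_two]

lemma exists_subspace {d : ℕ} (i₀ : Fin d) (n : ℕ) (V : (Fin d → ℝ) → ℝ) (β : ℝ)
    (hV : ∀ x, 0 ≤ V x ∧ V x ≤ β) :
    ∃ M : ℝ, ∃ W : Submodule ℝ ((Fin d → ℝ) → ℝ),
      (W : Set ((Fin d → ℝ) → ℝ)) ⊆ PeriodicLipschitz d ∧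
      Module.finrank ℝ W = n ∧
      ∀ v ∈ W, v ≠ 0 → energySq V v ≤ M * l2sq v := by
  have hinj : Function.Injective (sinComb i₀ n) := by
    rw [← LinearMap.ker_eq_bot, LinearMap.ker_eq_bot']
    exact sinComb_injective i₀ n
  have hker : (sinLp i₀ n).ker = ⊥ := by
    rw [LinearMap.ker_eq_bot']
    intro a ha
    by_contra hne
    have h1 : sinComb i₀ n a ≠ 0 := fun h => hne (sinComb_injective i₀ n a h)
    have h2 := l2sq_pos (sinComb_periodic i₀ n a) (sinComb_lipschitz i₀ n a).continuous h1
    rw [← sinLp_norm, ha] at h2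
    simp at h2
  obtain ⟨K, -, hK⟩ := (sinLp i₀ n).exists_antilipschitzWith hker
  set B : ℝ := d * (n * (n * (2 * π))) ^ 2 + β * n ^ 2 with hB
  have hβ : 0 ≤ β := (hV 0).1.trans (hV 0).2
  have hB0 : 0 ≤ B := by positivity
  refine ⟨B * (K : ℝ) ^ 2, LinearMap.range (sinComb i₀ n), ?_, ?_, ?_⟩
  · rintro _ ⟨a, rfl⟩
    exact ⟨sinComb_periodic i₀ n a, _, sinComb_lipschitz i₀ n a⟩
  · rw [LinearMap.finrank_range_of_inj hinj]
    simp
  · rintro _ ⟨a, rfl⟩ -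
    have hfin : volume (unitCell d) < ⊤ := (unitCell_bounded d).measure_lt_top
    have : IsFiniteMeasure (volume.restrict (unitCell d)) := ⟨by simpa using hfin⟩
    have hvol : volume (unitCell d) = 1 := by
      unfold unitCell
      rw [volume_pi_pi]
      simp
    have h1 : energySq V (sinComb i₀ n a) ≤ B * ‖a‖ ^ 2 := by
      have : ∫ x in unitCell d, B * ‖a‖ ^ 2 = B * ‖a‖ ^ 2 := by
        simp [Measure.real, hvol]
      rw [← this]
      apply integral_mono_of_nonneg
      · exact ae_of_all _ fun x =>
          add_nonneg (gradSq_nonneg _ x) (mul_nonneg (hV x).1 (sq_nonneg _))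
      · exact integrable_const _
      · refine ae_of_all _ fun x => ?_
        have g1 := gradSq_le (sinComb_lipschitz i₀ n a) x
        rw [Real.coe_toNNReal _ (by positivity)] at g1
        have g2 : V x * (sinComb i₀ n a x) ^ 2 ≤ β * (n * ‖a‖) ^ 2 := by
          have := (hV x).2
          have h3 := sinComb_abs_le i₀ n a x
          rw [← sq_abs]
          gcongr
        calc _ ≤ _ := add_le_add g1 g2
          _ = B * ‖a‖ ^ 2 := by rw [hB]; ring
    have h2 : ‖a‖ ≤ K * ‖sinLp i₀ n a‖ := by
      have := hK.le_mul_dist a 0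
      simpa using this
    calc _ ≤ _ := h1
      _ ≤ B * (K * ‖sinLp i₀ n a‖) ^ 2 := by gcongr
      _ = _ := by rw [← sinLp_norm]; ring

/-! ### Dimension count -/

lemma exists_mean_zero {d : ℕ} {ε : ℝ} (hε : 0 < ε) {ℓ m : ℕ} (hℓ : 0 < ℓ)
    (hm : 2 * ε * (m : ℝ) = 1) (W : Submodule ℝ ((Fin d → ℝ) → ℝ))
    (hW : (W : Set ((Fin d → ℝ) → ℝ)) ⊆ PeriodicLipschitz d)
    (hdim : Module.finrank ℝ W = m ^ d * ℓ ^ d + 1) :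
    ∃ v ∈ W, v ≠ 0 ∧ ∀ k, ∫ x in subBox (d := d) ε ℓ m k, v x = 0 := by
  have hfd : FiniteDimensional ℝ W := FiniteDimensional.of_finrank_pos (by omega)
  have hint : ∀ (v : W) k, IntegrableOn (v : (Fin d → ℝ) → ℝ) (subBox (d := d) ε ℓ m k) := by
    intro v k
    obtain ⟨-, K, hK⟩ := hW v.2
    exact integrableOn_of_continuous
      ((unitCell_bounded d).subset (subBox_subset hε hℓ hm k)) hK.continuous
  let Φ : W →ₗ[ℝ] ((Fin d → Fin m × Fin ℓ) → ℝ) :=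
    { toFun := fun v k => ∫ x in subBox (d := d) ε ℓ m k, (v : (Fin d → ℝ) → ℝ) x
      map_add' := by
        intro v w
        funext k
        exact integral_add (hint v k) (hint w k)
      map_smul' := by
        intro c v
        funext k
        exact integral_const_mul c _ }
  have hk : LinearMap.ker Φ ≠ ⊥ := by
    apply LinearMap.ker_ne_bot_of_finrank_lt
    rw [hdim]
    simp [mul_pow]
  obtain ⟨v, hv, hv0⟩ := Submodule.exists_mem_ne_zero_of_ne_bot hk
  refine ⟨v, v.2, fun h => hv0 (Subtype.ext h), fun k => ?_⟩
  exact congrFun (LinearMap.mem_ker.1 hv) k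

open scoped Classical in
/-- Lemma 5.3 of the paper: lower eigenvalue bound for the periodic
checkerboard potential. With `1/(2ε) = m ∈ ℕ`, `V(x) = α` iff `⌊xᵢ/ε⌋` is even for all
`i` (and `β` otherwise), and `N = (2ε)^{-d} = m^d`, there are constants `c, c' > 0`
depending only on `d` such that for every integer `ℓ ≥ 2`, if `β ≥ c'(ℓ-1)²ε⁻²`, then
`μ_{Nℓ^d + 1} ≥ c (ℓ-1)²/ε²`. -/
theorem statement16 (d : ℕ) (hd : 1 ≤ d) :
    ∃ c : ℝ, 0 < c ∧ ∃ c' : ℝ, 0 < c' ∧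
      ∀ (ε α β : ℝ) (V : (Fin d → ℝ) → ℝ) (m : ℕ),
        0 < ε → 0 < m → 2 * ε * (m : ℝ) = 1 →
        0 ≤ α → α ≤ β →
        (∀ x : Fin d → ℝ, V x = if ∀ i, Even ⌊x i / ε⌋ then α else β) →
        ∀ ℓ : ℕ, 2 ≤ ℓ → c' * ((ℓ : ℝ) - 1) ^ 2 / ε ^ 2 ≤ β →
          c * ((ℓ : ℝ) - 1) ^ 2 / ε ^ 2 ≤ minmaxVal d V (m ^ d * ℓ ^ d + 1) := by
  refine ⟨1 / (d * 2 ^ d + 1), by positivity, 1, one_pos, ?_⟩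
  intro ε α β V m hε _ hm hα hαβ hV ℓ hℓ hβ
  rw [one_mul] at hβ
  have hVb : ∀ x, 0 ≤ V x ∧ V x ≤ β := by
    intro x; rw [hV]; split_ifs
    · exact ⟨hα, hαβ⟩
    · exact ⟨hα.trans hαβ, le_rfl⟩
  unfold minmaxVal
  apply le_csInf
  · exact exists_subspace (⟨0, hd⟩ : Fin d) _ V β hVb
  · rintro M ⟨W, hW, hdim, hM⟩
    obtain ⟨v, hvW, hv0, hmean⟩ := exists_mean_zero hε (by omega : 0 < ℓ) hm W hW hdim
    obtain ⟨hper, K, hK⟩ := hW hvW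
    have h1 := energy_lower hK hε hα hαβ hℓ hm hV hβ hmean
    have h2 := hM v hvW hv0
    have h3 := l2sq_pos hper hK.continuous hv0
    have hC : (0 : ℝ) < d * 2 ^ d + 1 := by positivity
    rw [mul_div_assoc, one_div, inv_mul_le_iff₀ hC]
    refine le_of_mul_le_mul_right ?_ h3
    calc _ ≤ _ := h1
      _ ≤ (d * 2 ^ d + 1) * (M * l2sq v) := by gcongr
      _ = _ := by ring

end
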